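/- arXiv:2507.00915 — 9 statements merged into one kernel-verified Lean document; each statement's English description precedes it below -/
import Mathlib

section
/- Let Λ be a nonempty subset of the natural numbers and let Z = ∑_{ℓ∈Λ} 2^{-ℓ} (a convergent sum with 0 < Z < ∞). Define a probability mass function on Λ by p(ℓ) = 2^{-ℓ}/Z. Then the Shannon entropy H = ∑_{ℓ∈Λ} p(ℓ) log₂(1/p(ℓ)) satisfies H ≤ 2. -/
/-!
Weight `ℓ ∈ Λ` by `r ^ ℓ`, where `0 < r ≤ 1 / 2`; the theorem is the case `r = 1 / 2`. With `Z` the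
total weight, the entropy is `log Z - 𝔼[L] * log r`. Let `m = min Λ`. Comparing with the full
geometric tail on `{m, m + 1, …}` gives `Z ≤ r ^ m / (1 - r)`. The same comparison gives
`𝔼[L] ≤ m + r / (1 - r)`, the mean of the geometric law on that tail: since `r / (1 - r) ≤ 1`, every
level of the tail missing from `Λ` is at least this mean. The two bounds add up to the entropy
`binEntropy r / (1 - r)` of the geometric law.
-/

open Real

lemma tsum_subtype_le_of_hasSum_add {Λ : Set ℕ} {f : ℕ → ℝ} {m : ℕ} {a : ℝ}
    (hm : m ∈ lowerBounds Λ) (hf : HasSum (fun k ↦ f (m + k)) a)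
    (hnonneg : ∀ k, m + k ∉ Λ → 0 ≤ f (m + k)) : ∑' ℓ : Λ, f ℓ ≤ a := by
  have add_sub (ℓ : Λ) : m + (ℓ - m) = ℓ := Nat.add_sub_cancel' (hm ℓ.2)
  have sub_injective : Function.Injective fun ℓ : Λ ↦ (ℓ : ℕ) - m := fun i j hij ↦
    Subtype.ext <| by rw [← add_sub i, ← add_sub j]; exact congrArg (m + ·) hij
  have hfΛ : Summable fun ℓ : Λ ↦ f ℓ := by
    simpa only [Function.comp_def, add_sub] using hf.summable.comp_injective sub_injective
  refine hasSum_le_inj _ sub_injective (fun k hk ↦ hnonneg k fun hkΛ ↦ hk ?_)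
    (fun ℓ ↦ (congrArg f (add_sub ℓ)).ge) hfΛ.hasSum hf
  exact ⟨⟨m + k, hkΛ⟩, Nat.add_sub_cancel_left m k⟩

section GeometricWeights

variable {Λ : Set ℕ} {r : ℝ} {m : ℕ}

lemma summable_subtype_pow (Λ : Set ℕ) (hr : ‖r‖ < 1) :
    Summable fun ℓ : Λ ↦ r ^ (ℓ : ℕ) :=
  (summable_geometric_of_norm_lt_one hr).subtype Λ

lemma summable_subtype_coe_mul_pow (Λ : Set ℕ) (hr : ‖r‖ < 1) :
    Summable fun ℓ : Λ ↦ (ℓ : ℝ) * r ^ (ℓ : ℕ) :=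
  (hasSum_coe_mul_geometric_of_norm_lt_one hr).summable.subtype Λ

lemma tsum_subtype_pow_pos (hΛ : Λ.Nonempty) (hr₀ : 0 < r) (hr₁ : r < 1) :
    0 < ∑' ℓ : Λ, r ^ (ℓ : ℕ) :=
  have hnorm : ‖r‖ < 1 := by rwa [norm_of_nonneg hr₀.le]
  (summable_subtype_pow Λ hnorm).tsum_pos (fun _ ↦ by positivity) ⟨_, hΛ.some_mem⟩ (by positivity)

lemma tsum_subtype_pow_le (hm : m ∈ lowerBounds Λ) (hr₀ : 0 ≤ r) (hr₁ : r < 1) :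
    ∑' ℓ : Λ, r ^ (ℓ : ℕ) ≤ r ^ m / (1 - r) := by
  refine tsum_subtype_le_of_hasSum_add (f := (r ^ ·)) hm ?_ fun _ _ ↦ by positivity
  simpa only [pow_add, div_eq_mul_inv] using (hasSum_geometric_of_lt_one hr₀ hr₁).mul_left (r ^ m)

lemma hasSum_sub_mean_mul_pow (hr : ‖r‖ < 1) (m : ℕ) :
    HasSum (fun k ↦ (((m + k : ℕ) : ℝ) - (m + r / (1 - r))) * r ^ (m + k)) 0 := by
  have hcentered := ((hasSum_coe_mul_geometric_of_norm_lt_one hr).sub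
    ((hasSum_geometric_of_norm_lt_one hr).mul_left (r / (1 - r)))).mul_left (r ^ m)
  rw [← div_eq_mul_inv, div_div, ← sq, sub_self, mul_zero] at hcentered
  refine hcentered.congr_fun fun k ↦ ?_
  push_cast
  ring

lemma tsum_subtype_coe_mul_pow_le (hm : IsLeast Λ m) (hr₀ : 0 ≤ r) (hr : r ≤ 1 / 2) :
    ∑' ℓ : Λ, (ℓ : ℝ) * r ^ (ℓ : ℕ) ≤ (m + r / (1 - r)) * ∑' ℓ : Λ, r ^ (ℓ : ℕ) := by
  have hr₁ : r < 1 := by linarith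
  have hnorm : ‖r‖ < 1 := by rwa [norm_of_nonneg hr₀]
  have excess_le_one : r / (1 - r) ≤ 1 := by
    rw [div_le_one (by linarith)]
    linarith
  have centered_nonpos : ∑' ℓ : Λ, ((ℓ : ℝ) - (m + r / (1 - r))) * r ^ (ℓ : ℕ) ≤ 0 := by
    refine tsum_subtype_le_of_hasSum_add (f := fun n ↦ ((n : ℝ) - (m + r / (1 - r))) * r ^ n)
      hm.2 (hasSum_sub_mean_mul_pow hnorm m) fun k hk ↦ mul_nonneg ?_ (by positivity)
    have hk₀ : k ≠ 0 := by
      rintro rfl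
      exact hk hm.1
    have hk₁ : (1 : ℝ) ≤ k := by exact_mod_cast Nat.one_le_iff_ne_zero.2 hk₀
    push_cast
    linarith
  simp only [sub_mul] at centered_nonpos
  rwa [(summable_subtype_coe_mul_pow Λ hnorm).tsum_sub
    ((summable_subtype_pow Λ hnorm).mul_left _), tsum_mul_left, sub_nonpos] at centered_nonpos

end GeometricWeights

section Entropy

lemma hasSum_negMulLog_div {ι : Type*} {w : ι → ℝ} {Z S : ℝ} (hZ : Z ≠ 0) (hw : HasSum w Z)
    (hS : HasSum (fun i ↦ negMulLog (w i)) S) :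
    HasSum (fun i ↦ negMulLog (w i / Z)) (S / Z + log Z) := by
  have negMulLog_inv : negMulLog Z⁻¹ = Z⁻¹ * log Z := by rw [negMulLog, log_inv, neg_mul_neg]
  simp only [div_eq_mul_inv, negMulLog_mul, negMulLog_inv]
  have hsum := (hS.mul_left Z⁻¹).add (hw.mul_right (Z⁻¹ * log Z))
  rwa [mul_inv_cancel_left₀ hZ, mul_comm Z⁻¹ S] at hsum

lemma negMulLog_pow (x : ℝ) (n : ℕ) : negMulLog (x ^ n) = n * x ^ n * -log x := by
  rw [negMulLog, log_pow]
  ring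

lemma mul_logb_one_div (b x : ℝ) : x * logb b (1 / x) = negMulLog x / log b := by
  rw [logb, one_div, log_inv, negMulLog]
  ring

lemma binEntropy_div_one_sub {r : ℝ} (hr : r ≠ 1) :
    binEntropy r / (1 - r) = r / (1 - r) * -log r - log (1 - r) := by
  have : 1 - r ≠ 0 := sub_ne_zero.2 hr.symm
  rw [binEntropy, log_inv, log_inv]
  field_simp
  ring

lemma binEntropy_two_inv_div_one_sub_div_log_two :
    binEntropy 2⁻¹ / (1 - 2⁻¹) / log 2 = 2 := by
  rw [binEntropy_two_inv, div_right_comm, div_self (log_pos one_lt_two).ne']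
  norm_num

variable {Λ : Set ℕ} {r : ℝ}

lemma hasSum_negMulLog_pow_div (hΛ : Λ.Nonempty) (hr₀ : 0 < r) (hr₁ : r < 1) :
    HasSum (fun ℓ : Λ ↦ negMulLog (r ^ (ℓ : ℕ) / ∑' j : Λ, r ^ (j : ℕ)))
      ((∑' ℓ : Λ, (ℓ : ℝ) * r ^ (ℓ : ℕ)) * -log r / (∑' ℓ : Λ, r ^ (ℓ : ℕ)) +
        log (∑' ℓ : Λ, r ^ (ℓ : ℕ))) := by
  have hnorm : ‖r‖ < 1 := by rwa [norm_of_nonneg hr₀.le]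
  refine hasSum_negMulLog_div (tsum_subtype_pow_pos hΛ hr₀ hr₁).ne'
    (summable_subtype_pow Λ hnorm).hasSum ?_
  simpa only [negMulLog_pow] using (summable_subtype_coe_mul_pow Λ hnorm).hasSum.mul_right (-log r)

lemma tsum_negMulLog_pow_div_le (hΛ : Λ.Nonempty) (hr₀ : 0 < r) (hr : r ≤ 1 / 2) :
    ∑' ℓ : Λ, negMulLog (r ^ (ℓ : ℕ) / ∑' j : Λ, r ^ (j : ℕ)) ≤ binEntropy r / (1 - r) := by
  have hr₁ : r < 1 := by linarith
  have hm : IsLeast Λ (sInf Λ) := ⟨Nat.sInf_mem hΛ, fun _ ↦ Nat.sInf_le⟩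
  rw [(hasSum_negMulLog_pow_div hΛ hr₀ hr₁).tsum_eq, binEntropy_div_one_sub hr₁.ne]
  have hZ := tsum_subtype_pow_pos hΛ hr₀ hr₁
  have hZ_le := tsum_subtype_pow_le hm.2 hr₀.le hr₁
  have hmoment := tsum_subtype_coe_mul_pow_le hm hr₀.le hr
  set m := sInf Λ
  set Z := ∑' ℓ : Λ, r ^ (ℓ : ℕ)
  set M := ∑' ℓ : Λ, (ℓ : ℝ) * r ^ (ℓ : ℕ)
  have mean_le : M / Z ≤ m + r / (1 - r) := (div_le_iff₀ hZ).2 hmoment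
  have log_le : log Z ≤ m * log r - log (1 - r) := by
    rw [← log_pow, ← log_div (by positivity) (by linarith)]
    exact log_le_log hZ hZ_le
  calc M * -log r / Z + log Z = M / Z * -log r + log Z := by ring
    _ ≤ (m + r / (1 - r)) * -log r + (m * log r - log (1 - r)) := by
        have : 0 ≤ -log r := neg_nonneg.2 (log_nonpos hr₀.le hr₁.le)
        gcongr
    _ = r / (1 - r) * -log r - log (1 - r) := by ring

end Entropy

theorem knuth_yao_level_entropy_le_two_general {r b : ℝ} (hr₀ : 0 < r) (hr : r ≤ 1 / 2)
    (hb : 1 < b) {Λ : Set ℕ} (hΛ : Λ.Nonempty) {Z : ℝ} (hZ : Z = ∑' ℓ : Λ, r ^ (ℓ : ℕ))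
    {p : ℕ → ℝ} (hp : ∀ ℓ ∈ Λ, p ℓ = r ^ ℓ / Z) :
    ∑' ℓ : Λ, p ℓ * logb b (1 / p ℓ) ≤ binEntropy r / (1 - r) / log b := by
  have hterm (ℓ : Λ) : p ℓ * logb b (1 / p ℓ) =
      negMulLog (r ^ (ℓ : ℕ) / ∑' j : Λ, r ^ (j : ℕ)) / log b := by
    rw [mul_logb_one_div, hp ℓ ℓ.2, hZ]
  rw [tsum_congr hterm, tsum_div_const]
  exact div_le_div_of_nonneg_right (tsum_negMulLog_pow_div_le hΛ hr₀ hr) (log_pos hb).le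

/-- For a nonempty `Λ ⊆ ℕ` with normalizing constant
`Z = ∑_{ℓ ∈ Λ} 2^{-ℓ}` and pmf `p ℓ = 2^{-ℓ}/Z`, the Shannon entropy
`∑_{ℓ ∈ Λ} p ℓ · log₂(1/p ℓ)` is at most `2`. -/
theorem knuth_yao_level_entropy_le_two
    (Λ : Set ℕ) (hΛ : Λ.Nonempty)
    (Z : ℝ) (hZ : Z = ∑' ℓ : Λ, (2 : ℝ) ^ (-((ℓ : ℕ) : ℤ)))
    (p : ℕ → ℝ) (hp : ∀ ℓ ∈ Λ, p ℓ = (2 : ℝ) ^ (-((ℓ : ℕ) : ℤ)) / Z) :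
    (∑' ℓ : Λ, p ℓ * Real.logb 2 (1 / p ℓ)) ≤ 2 := by
  simp only [zpow_neg, zpow_natCast, ← inv_pow] at hZ hp
  exact (knuth_yao_level_entropy_le_two_general (by norm_num) (by norm_num) one_lt_two hΛ hZ
    hp).trans_eq binEntropy_two_inv_div_one_sub_div_log_two
end

section
/- Let Λ be a nonempty subset of the natural numbers, Z = ∑_{ℓ∈Λ} 2^{-ℓ}, and p(ℓ) = 2^{-ℓ}/Z for ℓ ∈ Λ. Then the Shannon entropy ∑_{ℓ∈Λ} p(ℓ) log₂(1/p(ℓ)) equals 2 if and only if Λ = {λ, λ+1, λ+2, …} for some natural number λ, i.e., Λ consists of all naturals at least its minimum (in which case L − λ follows the geometric distribution with success rate 1/2). -/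
/-!
If `L` has weights proportional to `r ^ ℓ` on `Λ`, with total mass `Z`, then
`log (1 / p ℓ) = ℓ * log (1 / r) + log Z`, so the entropy is `𝔼[L] * log (1 / r) + log Z`.
Fill `Λ` up to the tail `Ici m`, where `m = min Λ`. This strictly increases `Z`. The added points
all lie at or above `m + 1`, which for `r ≤ 1 / 2` is at least the mean `m + r / (1 - r)` of the
tail, so filling up does not decrease `𝔼[L]` either. Hence the entropy strictly increases unless
`Λ` is already the tail, and on every tail it is the entropy of the geometric distribution.
-/

open Set Real

/-- The normalizing constant `∑_{ℓ ∈ Λ} r ^ ℓ` of the geometric weights on `Λ`. -/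
noncomputable def geomMass (r : ℝ) (Λ : Set ℕ) : ℝ :=
  ∑' ℓ : Λ, r ^ (ℓ : ℕ)

/-- The mean of the distribution on `Λ` with weights proportional to `r ^ ℓ`
(with value `0` if `Λ` is empty). -/
noncomputable def geomMean (r : ℝ) (Λ : Set ℕ) : ℝ :=
  (∑' ℓ : Λ, (ℓ : ℕ) * r ^ (ℓ : ℕ)) / geomMass r Λ

/-- The Shannon entropy, in base `b`, of the distribution on `Λ` with weights proportional to
`r ^ ℓ`. -/
noncomputable def geomEntropy (b r : ℝ) (Λ : Set ℕ) : ℝ :=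
  ∑' ℓ : Λ, r ^ (ℓ : ℕ) / geomMass r Λ * logb b (1 / (r ^ (ℓ : ℕ) / geomMass r Λ))

theorem tsum_subtype_add_tsum_diff {α M : Type*} [AddCommGroup M] [UniformSpace M]
    [IsUniformAddGroup M] [CompleteSpace M] [T2Space M] {f : α → M} {s t : Set α}
    (hf : Summable f) (hst : s ⊆ t) :
    ∑' x : s, f x + ∑' x : ↥(t \ s), f x = ∑' x : t, f x := by
  rw [← (hf.subtype s).tsum_union_disjoint disjoint_sdiff_right (hf.subtype _),
    union_sdiff_cancel hst]

theorem tsum_Ici_eq_tsum_add {M : Type*} [AddCommMonoid M] [TopologicalSpace M] (f : ℕ → M)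
    (m : ℕ) : ∑' ℓ : Ici m, f ℓ = ∑' k, f (k + m) := by
  have hrange : Ici m = range (· + m) := by
    ext ℓ
    simp [le_iff_exists_add', eq_comm]
  rw [hrange, tsum_range f (add_left_injective m)]

section Geometric

variable {b r : ℝ} {Λ Λ' : Set ℕ} {m : ℕ}

theorem summable_coe_mul_pow (h0 : 0 ≤ r) (h1 : r < 1) : Summable fun ℓ : ℕ => ℓ * r ^ ℓ :=
  (hasSum_coe_mul_geometric_of_norm_lt_one (by rwa [norm_of_nonneg h0])).summable

theorem hasSum_geomMass (h0 : 0 ≤ r) (h1 : r < 1) (Λ : Set ℕ) :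
    HasSum (fun ℓ : Λ => r ^ (ℓ : ℕ)) (geomMass r Λ) :=
  ((summable_geometric_of_lt_one h0 h1).subtype Λ).hasSum

theorem geomMass_pos (h0 : 0 < r) (h1 : r < 1) (hΛ : Λ.Nonempty) : 0 < geomMass r Λ := by
  obtain ⟨ℓ, hℓ⟩ := hΛ
  exact (hasSum_geomMass h0.le h1 Λ).summable.tsum_pos (fun _ => pow_nonneg h0.le _) ⟨ℓ, hℓ⟩
    (pow_pos h0 ℓ)

theorem geomMass_lt_geomMass (h0 : 0 < r) (h1 : r < 1) (h : Λ ⊂ Λ') :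
    geomMass r Λ < geomMass r Λ' := by
  have hsplit : geomMass r Λ + geomMass r (Λ' \ Λ) = geomMass r Λ' :=
    tsum_subtype_add_tsum_diff (summable_geometric_of_lt_one h0.le h1) h.subset
  have hdiff : 0 < geomMass r (Λ' \ Λ) := geomMass_pos h0 h1 (nonempty_of_ssubset h)
  linarith

theorem geomMass_Ici (h0 : 0 ≤ r) (h1 : r < 1) (m : ℕ) :
    geomMass r (Ici m) = r ^ m / (1 - r) := by
  rw [geomMass, tsum_Ici_eq_tsum_add (r ^ ·)]
  simp only [pow_add]
  rw [tsum_mul_right, tsum_geometric_of_lt_one h0 h1, inv_mul_eq_div]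

theorem hasSum_coe_mul_pow (h0 : 0 < r) (h1 : r < 1) (hΛ : Λ.Nonempty) :
    HasSum (fun ℓ : Λ => (ℓ : ℕ) * r ^ (ℓ : ℕ)) (geomMean r Λ * geomMass r Λ) := by
  rw [geomMean, div_mul_cancel₀ _ (geomMass_pos h0 h1 hΛ).ne']
  exact ((summable_coe_mul_pow h0.le h1).subtype Λ).hasSum

theorem tsum_sub_mul_pow (h0 : 0 < r) (h1 : r < 1) (hΛ : Λ.Nonempty) (c : ℝ) :
    ∑' ℓ : Λ, ((ℓ : ℕ) - c) * r ^ (ℓ : ℕ) = (geomMean r Λ - c) * geomMass r Λ := by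
  simp only [sub_mul]
  exact ((hasSum_coe_mul_pow h0 h1 hΛ).sub ((hasSum_geomMass h0.le h1 Λ).mul_left c)).tsum_eq

theorem geomMean_Ici (h0 : 0 < r) (h1 : r < 1) (m : ℕ) :
    geomMean r (Ici m) = m + r / (1 - r) := by
  have hr : 1 - r ≠ 0 := (sub_pos.2 h1).ne'
  have hcentered : ∑' ℓ : Ici m, ((ℓ : ℕ) - (m : ℝ)) * r ^ (ℓ : ℕ) = r / (1 - r) ^ 2 * r ^ m := by
    rw [tsum_Ici_eq_tsum_add (fun ℓ => ((ℓ : ℝ) - m) * r ^ ℓ)]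
    simp only [Nat.cast_add, add_sub_cancel_right, pow_add, ← mul_assoc]
    rw [tsum_mul_right, tsum_coe_mul_geometric_of_norm_lt_one (by rwa [norm_of_nonneg h0.le])]
  rw [tsum_sub_mul_pow h0 h1 nonempty_Ici, geomMass_Ici h0.le h1] at hcentered
  have hpow : r ^ m ≠ 0 := (pow_pos h0 m).ne'
  rw [← sub_eq_iff_eq_add']
  field_simp at hcentered ⊢
  exact hcentered

theorem geomMean_le_geomMean (h0 : 0 < r) (h1 : r < 1) (hΛ : Λ.Nonempty) (hsub : Λ ⊆ Λ')
    (hge : ∀ ℓ ∈ Λ' \ Λ, geomMean r Λ' ≤ ℓ) : geomMean r Λ ≤ geomMean r Λ' := by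
  set c := geomMean r Λ' with hc
  have hsummable : Summable fun ℓ : ℕ => (ℓ - c) * r ^ ℓ := by
    simp only [sub_mul]
    exact (summable_coe_mul_pow h0.le h1).sub
      ((summable_geometric_of_lt_one h0.le h1).mul_left c)
  have hdiff : 0 ≤ ∑' ℓ : ↥(Λ' \ Λ), ((ℓ : ℕ) - c) * r ^ (ℓ : ℕ) :=
    tsum_nonneg fun ℓ => mul_nonneg (sub_nonneg.2 (hge ℓ ℓ.2)) (pow_nonneg h0.le _)
  have hsplit := tsum_subtype_add_tsum_diff hsummable hsub
  rw [tsum_sub_mul_pow h0 h1 hΛ, tsum_sub_mul_pow h0 h1 (hΛ.mono hsub), ← hc, sub_self,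
    zero_mul] at hsplit
  have hcentered : (geomMean r Λ - c) * geomMass r Λ ≤ 0 := by linarith
  exact sub_nonpos.1 (nonpos_of_mul_nonpos_left hcentered (geomMass_pos h0 h1 hΛ))

theorem geomMean_le_geomMean_Ici (h0 : 0 < r) (hr : r ≤ 1 / 2) (hm : m ∈ Λ) (hsub : Λ ⊆ Ici m) :
    geomMean r Λ ≤ geomMean r (Ici m) := by
  have h1 : r < 1 := by linarith
  refine geomMean_le_geomMean h0 h1 ⟨m, hm⟩ hsub fun ℓ hℓ => ?_
  have hlt : m < ℓ := lt_of_le_of_ne hℓ.1 fun h => hℓ.2 (h ▸ hm)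
  have hratio : r / (1 - r) ≤ 1 := (div_le_one (sub_pos.2 h1)).2 (by linarith)
  calc geomMean r (Ici m) = m + r / (1 - r) := geomMean_Ici h0 h1 m
    _ ≤ m + 1 := by gcongr
    _ ≤ ℓ := by exact_mod_cast hlt

theorem geomEntropy_eq (b : ℝ) (h0 : 0 < r) (h1 : r < 1) (hΛ : Λ.Nonempty) :
    geomEntropy b r Λ = geomMean r Λ * logb b r⁻¹ + logb b (geomMass r Λ) := by
  have hZ := (geomMass_pos h0 h1 hΛ).ne'
  have hlog (ℓ : ℕ) : logb b (1 / (r ^ ℓ / geomMass r Λ)) =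
      ℓ * logb b r⁻¹ + logb b (geomMass r Λ) := by
    rw [one_div_div, logb_div hZ (pow_pos h0 ℓ).ne', logb_pow, logb_inv]
    ring
  have hterm (ℓ : ℕ) : r ^ ℓ / geomMass r Λ * logb b (1 / (r ^ ℓ / geomMass r Λ)) =
      (ℓ * r ^ ℓ * logb b r⁻¹ + r ^ ℓ * logb b (geomMass r Λ)) / geomMass r Λ := by
    rw [hlog]
    ring
  have hsum := (((hasSum_coe_mul_pow h0 h1 hΛ).mul_right (logb b r⁻¹)).add
    ((hasSum_geomMass h0.le h1 Λ).mul_right (logb b (geomMass r Λ)))).div_const (geomMass r Λ)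
  simp only [geomEntropy, hterm]
  rw [hsum.tsum_eq]
  field_simp

theorem geomEntropy_Ici (b : ℝ) (h0 : 0 < r) (h1 : r < 1) (m : ℕ) :
    geomEntropy b r (Ici m) = binEntropy r / ((1 - r) * log b) := by
  have hr : 1 - r ≠ 0 := (sub_pos.2 h1).ne'
  rw [geomEntropy_eq b h0 h1 nonempty_Ici, geomMean_Ici h0 h1, geomMass_Ici h0.le h1,
    logb_div (pow_pos h0 m).ne' hr, logb_pow, logb_inv, binEntropy, log_inv, log_inv,
    logb, logb, ← div_div]
  field_simp
  ring

theorem geomEntropy_lt_geomEntropy_Ici (hb : 1 < b) (h0 : 0 < r) (hr : r ≤ 1 / 2) (hm : m ∈ Λ)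
    (hss : Λ ⊂ Ici m) : geomEntropy b r Λ < geomEntropy b r (Ici m) := by
  have h1 : r < 1 := by linarith
  have hlog : 0 ≤ logb b r⁻¹ := logb_nonneg hb ((one_le_inv₀ h0).2 h1.le)
  rw [geomEntropy_eq b h0 h1 ⟨m, hm⟩, geomEntropy_eq b h0 h1 nonempty_Ici]
  exact add_lt_add_of_le_of_lt
    (mul_le_mul_of_nonneg_right (geomMean_le_geomMean_Ici h0 hr hm hss.subset) hlog)
    (logb_lt_logb hb (geomMass_pos h0 h1 ⟨m, hm⟩) (geomMass_lt_geomMass h0 h1 hss))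

end Geometric

theorem knuth_yao_level_entropy_eq_two_iff_general {b r : ℝ} (hb : 1 < b) (h0 : 0 < r)
    (hr : r ≤ 1 / 2) (Λ : Set ℕ) (hΛ : Λ.Nonempty)
    (Z : ℝ) (hZ : Z = ∑' ℓ : Λ, r ^ (ℓ : ℕ)) (p : ℕ → ℝ) (hp : ∀ ℓ ∈ Λ, p ℓ = r ^ ℓ / Z) :
    (∑' ℓ : Λ, p ℓ * logb b (1 / p ℓ)) = binEntropy r / ((1 - r) * log b) ↔
      ∃ lam : ℕ, Λ = Ici lam := by
  have h1 : r < 1 := by linarith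
  have hentropy : ∑' ℓ : Λ, p ℓ * logb b (1 / p ℓ) = geomEntropy b r Λ :=
    tsum_congr fun ℓ => by rw [hp ℓ ℓ.2, hZ, geomMass]
  rw [hentropy]
  constructor
  · intro heq
    have hsub : Λ ⊆ Ici (sInf Λ) := fun ℓ hℓ => Nat.sInf_le hℓ
    refine ⟨sInf Λ, by_contra fun hne => ?_⟩
    have hlt := geomEntropy_lt_geomEntropy_Ici hb h0 hr (Nat.sInf_mem hΛ) (hsub.ssubset_of_ne hne)
    exact hlt.ne (heq.trans (geomEntropy_Ici b h0 h1 _).symm)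
  · rintro ⟨m, rfl⟩
    exact geomEntropy_Ici b h0 h1 m

/-- For a nonempty `Λ ⊆ ℕ` with normalizing constant
`Z = ∑_{ℓ ∈ Λ} 2^{-ℓ}` and pmf `p ℓ = 2^{-ℓ}/Z`, the Shannon entropy
`∑_{ℓ ∈ Λ} p ℓ · log₂(1/p ℓ)` equals `2` if and only if `Λ` is an upper tail
`{λ, λ+1, λ+2, …}` of the naturals (in which case the pmf is a shifted
geometric distribution with success rate `1/2`). -/
theorem knuth_yao_level_entropy_eq_two_iff
    (Λ : Set ℕ) (hΛ : Λ.Nonempty)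
    (Z : ℝ) (hZ : Z = ∑' ℓ : Λ, (2 : ℝ) ^ (-((ℓ : ℕ) : ℤ)))
    (p : ℕ → ℝ) (hp : ∀ ℓ ∈ Λ, p ℓ = (2 : ℝ) ^ (-((ℓ : ℕ) : ℤ)) / Z) :
    (∑' ℓ : Λ, p ℓ * Real.logb 2 (1 / p ℓ)) = 2 ↔
      ∃ lam : ℕ, Λ = Set.Ici lam := by
  have hvalue : binEntropy 2⁻¹ / ((1 - 2⁻¹) * log 2) = 2 := by
    rw [binEntropy_two_inv]; field_simp; norm_num
  simpa only [hvalue] using knuth_yao_level_entropy_eq_two_iff_general one_lt_two (by norm_num)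
    (one_div (2 : ℝ)).ge Λ hΛ Z (by simpa using hZ) p (by simpa using hp)
end

section
/- Let Γ be a nonempty subset of ℕ × Bool (pairs of a natural number and one of two symbols) such that Z = ∑_{(ℓ,s)∈Γ} 2^{-ℓ} is finite, and define a probability mass function on Γ by p(ℓ,s) = 2^{-ℓ}/Z. Then the Shannon entropy H = ∑_{(ℓ,s)∈Γ} p(ℓ,s) log₂(1/p(ℓ,s)) satisfies H ≤ 3. -/
/-!
Let `K` be the number of symbols, `Z` the partition sum and `M = ∑ ℓ 2^{-ℓ}` over `Γ`, so that the
entropy is `M / Z + log₂ Z`. Since `ℓ ≤ D + (ℓ - D)⁺`, every cutoff level `D` gives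
`M ≤ D Z + K ∑ₙ (n - D)⁺ 2^{-n} = D Z + 2 K 2^{-D}`. As `0 < Z ≤ 2 K`, the cutoff can be chosen with
`Z = u K 2^{-D}` and `1 ≤ u ≤ 2`; then the entropy is at most `log₂ K + (log₂ u + 2 / u)`, and
concavity of the logarithm bounds the bracket by its common value `2` at `u = 1` and `u = 2`.
-/

theorem logb_two_add_two_div_le_two {u : ℝ} (h1 : 1 ≤ u) (h2 : u ≤ 2) :
    Real.logb 2 u + 2 / u ≤ 2 := by
  have hu : 0 < u := by linarith
  have ht0 : 0 ≤ 2 / u - 1 := sub_nonneg.2 ((one_le_div hu).2 h2)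
  have ht1 : 2 / u - 1 ≤ 1 := by
    have : 2 / u ≤ 2 := div_le_self zero_le_two h1
    linarith
  have bernoulli : (2 : ℝ) ^ (2 / u - 1) ≤ 2 / u := by
    simpa [one_add_one_eq_two] using
      rpow_one_add_le_one_add_mul_self (s := 1) (by norm_num) ht0 ht1
  have hlog : 2 / u - 1 ≤ Real.logb 2 (2 / u) :=
    (Real.le_logb_iff_rpow_le one_lt_two (by positivity)).2 bernoulli
  rw [Real.logb_div two_ne_zero hu.ne', Real.logb_self_eq_one one_lt_two] at hlog
  linarith

theorem hasSum_coe_mul_geometric_two : HasSum (fun n : ℕ => (n : ℝ) * (1 / 2) ^ n) 2 := by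
  have hvalue : (1 / 2 : ℝ) / (1 - 1 / 2) ^ 2 = 2 := by norm_num
  simpa only [hvalue] using
    hasSum_coe_mul_geometric_of_norm_lt_one (r := (1 / 2 : ℝ)) (by norm_num)

theorem hasSum_coe_tsub_mul_geometric_two (D : ℕ) :
    HasSum (fun n : ℕ => ((n - D : ℕ) : ℝ) * (1 / 2) ^ n) (2 * (1 / 2) ^ D) := by
  have below : ∑ n ∈ Finset.range D, ((n - D : ℕ) : ℝ) * (1 / 2) ^ n = 0 :=
    Finset.sum_eq_zero fun n hn => by
      rw [Nat.sub_eq_zero_of_le (Finset.mem_range.1 hn).le, Nat.cast_zero, zero_mul]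
  rw [← hasSum_nat_add_iff' D, below, sub_zero]
  simpa only [Nat.add_sub_cancel, pow_add, mul_assoc]
    using hasSum_coe_mul_geometric_two.mul_right ((1 / 2 : ℝ) ^ D)

section FiniteFibers

variable {α β : Type*} [Finite α] (A : Set (β × α))

theorem hasSum_comp_fst {f : β → ℝ} {a : ℝ} (hf : HasSum f a) (hf0 : 0 ≤ f) :
    HasSum (fun x : β × α => f x.1) (a * Nat.card α) := by
  have hcard : HasSum (fun _ : α => (1 : ℝ)) (Nat.card α) := by
    have := Fintype.ofFinite α
    simpa using hasSum_fintype fun _ : α => (1 : ℝ)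
  simpa only [mul_one] using
    hf.mul hcard (hf.summable.mul_of_nonneg hcard.summable hf0 fun _ => zero_le_one)

theorem summable_subtype_fst {f : β → ℝ} (hf : Summable f) (hf0 : 0 ≤ f) :
    Summable fun x : A => f x.1.1 :=
  (hasSum_comp_fst hf.hasSum hf0).summable.subtype A

theorem tsum_subtype_fst_le {f : β → ℝ} {a : ℝ} (hf : HasSum f a) (hf0 : 0 ≤ f) :
    ∑' x : A, f x.1.1 ≤ a * Nat.card α := by
  have h := hasSum_comp_fst (α := α) hf hf0
  exact (h.summable.tsum_subtype_le (fun x => f x.1) A fun x => hf0 x.1).trans_eq h.tsum_eq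

end FiniteFibers

section Levels

variable {α : Type*} (Γ : Set (ℕ × α))

/-- The partition sum `∑_{(ℓ,s) ∈ Γ} 2^{-ℓ}`, which normalizes the weights `2^{-ℓ}` on `Γ`. -/
noncomputable def levelMass : ℝ := ∑' x : Γ, (1 / 2 : ℝ) ^ x.1.1

/-- The unnormalized mean level `∑_{(ℓ,s) ∈ Γ} ℓ 2^{-ℓ}`; dividing it by `levelMass Γ` gives the
expected level. -/
noncomputable def levelMoment : ℝ := ∑' x : Γ, (x.1.1 : ℝ) * (1 / 2) ^ x.1.1

variable [Finite α]

theorem hasSum_levelMass : HasSum (fun x : Γ => (1 / 2 : ℝ) ^ x.1.1) (levelMass Γ) :=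
  (summable_subtype_fst Γ summable_geometric_two fun n => by positivity).hasSum

theorem hasSum_levelMoment :
    HasSum (fun x : Γ => (x.1.1 : ℝ) * (1 / 2) ^ x.1.1) (levelMoment Γ) :=
  (summable_subtype_fst Γ hasSum_coe_mul_geometric_two.summable fun n => by positivity).hasSum

theorem levelMass_le_two_mul_card : levelMass Γ ≤ 2 * Nat.card α :=
  tsum_subtype_fst_le Γ hasSum_geometric_two fun n => by positivity

theorem levelMoment_le_mul_levelMass_add (D : ℕ) :
    levelMoment Γ ≤ D * levelMass Γ + 2 * (1 / 2) ^ D * Nat.card α := by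
  have excess := hasSum_coe_tsub_mul_geometric_two D
  have excess_nonneg : (0 : ℕ → ℝ) ≤ fun n => ((n - D : ℕ) : ℝ) * (1 / 2) ^ n :=
    fun n => by positivity
  have hbound := ((hasSum_levelMass Γ).mul_left (D : ℝ)).add
    (summable_subtype_fst Γ excess.summable excess_nonneg).hasSum
  calc levelMoment Γ
      ≤ D * levelMass Γ + ∑' x : Γ, ((x.1.1 - D : ℕ) : ℝ) * (1 / 2) ^ x.1.1 := by
        refine hasSum_le (fun x => ?_) (hasSum_levelMoment Γ) hbound
        rw [← add_mul]
        gcongr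
        exact_mod_cast le_add_tsub
    _ ≤ D * levelMass Γ + 2 * (1 / 2) ^ D * Nat.card α := by
        gcongr
        exact tsum_subtype_fst_le Γ excess excess_nonneg

variable {Γ}

theorem levelMass_pos (hΓ : Γ.Nonempty) : 0 < levelMass Γ := by
  obtain ⟨x, hx⟩ := hΓ
  exact (hasSum_levelMass Γ).summable.tsum_pos (fun _ => by positivity) ⟨x, hx⟩ (by positivity)

theorem hasSum_level_entropy (hΓ : Γ.Nonempty) :
    HasSum (fun x : Γ => (1 / 2 : ℝ) ^ x.1.1 / levelMass Γ *
        Real.logb 2 (1 / ((1 / 2) ^ x.1.1 / levelMass Γ)))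
      (levelMoment Γ / levelMass Γ + Real.logb 2 (levelMass Γ)) := by
  have hZ := levelMass_pos hΓ
  have surprisal (n : ℕ) : Real.logb 2 (1 / ((1 / 2) ^ n / levelMass Γ)) =
      n + Real.logb 2 (levelMass Γ) := by
    rw [one_div_div, Real.logb_div hZ.ne' (by positivity), Real.logb_pow, one_div,
      Real.logb_inv, Real.logb_self_eq_one one_lt_two]
    ring
  have hsum := ((hasSum_levelMoment Γ).div_const (levelMass Γ)).add
    ((hasSum_levelMass Γ).mul_right (Real.logb 2 (levelMass Γ) / levelMass Γ))
  rw [mul_div_cancel₀ _ hZ.ne'] at hsum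
  refine hsum.congr_fun fun x => ?_
  rw [surprisal]
  ring

theorem exists_levelMass_eq_mul_pow (hΓ : Γ.Nonempty) :
    ∃ (D : ℕ) (u : ℝ), 1 ≤ u ∧ u ≤ 2 ∧ levelMass Γ = u * (Nat.card α * (1 / 2) ^ D) := by
  have hK : (0 : ℝ) < Nat.card α := by
    obtain ⟨x, -⟩ := hΓ
    have : Nonempty α := ⟨x.2⟩
    exact_mod_cast Nat.card_pos (α := α)
  have hratio : levelMass Γ / (2 * Nat.card α) ≤ 1 :=
    (div_le_one (by positivity)).2 (levelMass_le_two_mul_card Γ)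
  obtain ⟨D, hlower, hupper⟩ := exists_nat_pow_near_of_lt_one
    (div_pos (levelMass_pos hΓ) (by positivity)) hratio one_half_pos one_half_lt_one
  rw [lt_div_iff₀ (by positivity), pow_succ] at hlower
  rw [div_le_iff₀ (by positivity)] at hupper
  have hunit : (0 : ℝ) < Nat.card α * (1 / 2) ^ D := by positivity
  refine ⟨D, levelMass Γ / (Nat.card α * (1 / 2) ^ D), ?_, ?_,
    (div_mul_cancel₀ _ hunit.ne').symm⟩
  · rw [one_le_div hunit]
    linarith
  · rw [div_le_iff₀ hunit]
    linarith

theorem levelMoment_div_levelMass_add_logb_le (hΓ : Γ.Nonempty) :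
    levelMoment Γ / levelMass Γ + Real.logb 2 (levelMass Γ) ≤
      Real.logb 2 (Nat.card α) + 2 := by
  have hZ := levelMass_pos hΓ
  obtain ⟨D, u, hu1, hu2, hmass⟩ := exists_levelMass_eq_mul_pow hΓ
  have hu : 0 < u := by linarith
  have hK : (Nat.card α : ℝ) ≠ 0 := fun h => by simp [hmass, h] at hZ
  have hmean : levelMoment Γ / levelMass Γ ≤ D + 2 / u := by
    rw [div_le_iff₀ hZ]
    calc levelMoment Γ
        ≤ D * levelMass Γ + 2 * (1 / 2) ^ D * Nat.card α := levelMoment_le_mul_levelMass_add Γ D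
      _ = (D + 2 / u) * levelMass Γ := by
        rw [hmass]
        field_simp
  have hlog : Real.logb 2 (levelMass Γ) =
      Real.logb 2 u + Real.logb 2 (Nat.card α) - D := by
    rw [hmass, Real.logb_mul hu.ne' (by positivity), Real.logb_mul hK (by positivity),
      Real.logb_pow, one_div, Real.logb_inv, Real.logb_self_eq_one one_lt_two]
    ring
  linarith [logb_two_add_two_div_le_two hu1 hu2]

end Levels

theorem han_hoshi_level_entropy_le_three_general {α : Type*} [Finite α]
    (Γ : Set (ℕ × α)) (hΓ : Γ.Nonempty)
    (Z : ℝ) (hZ : Z = ∑' x : Γ, (2 : ℝ) ^ (-((x : ℕ × α).1 : ℤ)))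
    (p : ℕ × α → ℝ) (hp : ∀ x ∈ Γ, p x = (2 : ℝ) ^ (-(x.1 : ℤ)) / Z) :
    ∑' x : Γ, p x * Real.logb 2 (1 / p x) ≤ Real.logb 2 (Nat.card α) + 2 := by
  have hweight (n : ℕ) : (2 : ℝ) ^ (-(n : ℤ)) = (1 / 2) ^ n := by simp
  simp only [hweight] at hZ hp
  change Z = levelMass Γ at hZ
  calc ∑' x : Γ, p x * Real.logb 2 (1 / p x)
      = ∑' x : Γ, (1 / 2 : ℝ) ^ x.1.1 / levelMass Γ *
          Real.logb 2 (1 / ((1 / 2) ^ x.1.1 / levelMass Γ)) :=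
        tsum_congr fun x => by rw [hp x x.2, hZ]
    _ = levelMoment Γ / levelMass Γ + Real.logb 2 (levelMass Γ) :=
        (hasSum_level_entropy hΓ).tsum_eq
    _ ≤ Real.logb 2 (Nat.card α) + 2 := levelMoment_div_levelMass_add_logb_le hΓ

/-- For a nonempty `Γ ⊆ ℕ × Bool` with finite normalizing constant
`Z = ∑_{(ℓ,s) ∈ Γ} 2^{-ℓ}` and pmf `p (ℓ,s) = 2^{-ℓ}/Z`, the Shannon entropy
`∑_{(ℓ,s) ∈ Γ} p (ℓ,s) · log₂(1/p (ℓ,s))` is at most `3`. -/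
theorem han_hoshi_level_entropy_le_three
    (Γ : Set (ℕ × Bool)) (hΓ : Γ.Nonempty)
    (Z : ℝ) (hZ : Z = ∑' x : Γ, (2 : ℝ) ^ (-(((x : ℕ × Bool).1 : ℕ) : ℤ)))
    (hZfin : Summable fun x : Γ => (2 : ℝ) ^ (-(((x : ℕ × Bool).1 : ℕ) : ℤ)))
    (p : ℕ × Bool → ℝ)
    (hp : ∀ x ∈ Γ, p x = (2 : ℝ) ^ (-((x.1 : ℕ) : ℤ)) / Z) :
    (∑' x : Γ, p x * Real.logb 2 (1 / p x)) ≤ 3 := by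
  refine (han_hoshi_level_entropy_le_three_general Γ hΓ Z hZ p hp).trans_eq ?_
  norm_num [Real.logb_self_eq_one]
end

section
/- Let 0 ≤ a ≤ b ≤ 1 be real numbers and let ℓ ≥ 1 be an integer. Then there are at most two integers k such that the dyadic interval [k·2^{-ℓ}, (k+1)·2^{-ℓ}] is contained in [a, b] while its parent dyadic interval [2⌊k/2⌋·2^{-ℓ}, (2⌊k/2⌋+2)·2^{-ℓ}] is not contained in [a, b]. -/
/-!
The parent of a cell inside `[a, b]` can fail to lie inside `[a, b]` only on the side of the cell's
sibling. If the index `k` is odd, the sibling is on the left and `k` is the least index whose left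
endpoint is at least `a`; if `k` is even, the sibling is on the right and `k` is the greatest index
whose right endpoint is at most `b`. Each of these two conditions determines `k`. Only the order of
the endpoints matters, so the dyadic grid may be replaced by any monotone sequence indexed by `ℤ`.
-/

theorem encard_isLeast_or_isGreatest_le_two {α : Type*} [PartialOrder α] (S T : Set α) :
    {k | IsLeast S k ∨ IsGreatest T k}.encard ≤ 2 := by
  have least_le_one : {k | IsLeast S k}.encard ≤ 1 :=
    Set.encard_le_one_iff.2 fun _ _ hi hj => hi.unique hj
  have greatest_le_one : {k | IsGreatest T k}.encard ≤ 1 :=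
    Set.encard_le_one_iff.2 fun _ _ hi hj => hi.unique hj
  calc {k | IsLeast S k ∨ IsGreatest T k}.encard
      ≤ {k | IsLeast S k}.encard + {k | IsGreatest T k}.encard := Set.encard_union_le _ _
    _ ≤ 1 + 1 := add_le_add least_le_one greatest_le_one
    _ = 2 := one_add_one_eq_two

theorem isLeast_of_isUpperSet_of_pred_notMem {α : Type*} [LinearOrder α] [PredOrder α] {S : Set α}
    (hS : IsUpperSet S) {k : α} (hk : k ∈ S) (hpred : Order.pred k ∉ S) : IsLeast S k :=
  ⟨hk, fun _ hj => le_of_not_gt fun hjk => hpred (hS (Order.le_pred_of_lt hjk) hj)⟩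

theorem isGreatest_of_isLowerSet_of_succ_notMem {α : Type*} [LinearOrder α] [SuccOrder α]
    {S : Set α} (hS : IsLowerSet S) {k : α} (hk : k ∈ S) (hsucc : Order.succ k ∉ S) :
    IsGreatest S k :=
  ⟨hk, fun _ hj => le_of_not_gt fun hkj => hsucc (hS (Order.succ_le_of_lt hkj) hj)⟩

/-- Acceptance of the cell `[x k, x (k + 1)]` of the grid `x` into the target `[a, b]`: the cell
lies inside the target, but its parent, the union of the sibling cells `2 * (k / 2)` and
`2 * (k / 2) + 1`, does not. Containment is expressed by comparing endpoints. -/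
def IsAcceptedCell {α : Type*} [Preorder α] (x : ℤ → α) (a b : α) (k : ℤ) : Prop :=
  (a ≤ x k ∧ x (k + 1) ≤ b) ∧ ¬(a ≤ x (2 * (k / 2)) ∧ x (2 * (k / 2) + 2) ≤ b)

namespace IsAcceptedCell

variable {α : Type*} [Preorder α] {x : ℤ → α} {a b : α} {k : ℤ}

theorem isGreatest_of_even (h : IsAcceptedCell x a b k) (hx : Monotone x) (hk : Even k) :
    IsGreatest {j | x (j + 1) ≤ b} k := by
  obtain ⟨⟨left_le, le_right⟩, parent_not_inside⟩ := h
  rw [Int.two_mul_ediv_two_of_even hk] at parent_not_inside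
  have lower : IsLowerSet {j | x (j + 1) ≤ b} := fun _ _ hij hi =>
    (hx (add_le_add_left hij 1)).trans hi
  have sibling_right : Order.succ k + 1 = k + 2 := by rw [Order.succ_eq_add_one]; ring
  refine isGreatest_of_isLowerSet_of_succ_notMem lower le_right fun sibling_le_right => ?_
  exact parent_not_inside ⟨left_le, sibling_right ▸ sibling_le_right⟩

theorem isLeast_of_odd (h : IsAcceptedCell x a b k) (hx : Monotone x) (hk : Odd k) :
    IsLeast {j | a ≤ x j} k := by
  obtain ⟨⟨left_le, le_right⟩, parent_not_inside⟩ := h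
  have parent_left : 2 * (k / 2) = k - 1 :=
    eq_sub_of_add_eq (Int.two_mul_ediv_two_add_one_of_odd hk)
  have parent_right : k - 1 + 2 = k + 1 := by ring
  rw [parent_left, parent_right] at parent_not_inside
  have upper : IsUpperSet {j | a ≤ x j} := fun _ _ hij hi => hi.trans (hx hij)
  refine isLeast_of_isUpperSet_of_pred_notMem upper left_le fun left_le_sibling => ?_
  exact parent_not_inside ⟨left_le_sibling, le_right⟩

end IsAcceptedCell

theorem at_most_two_accepted_dyadic_intervals_general {α : Type*} [Preorder α] {x : ℤ → α}
    (hx : Monotone x) (a b : α) : {k | IsAcceptedCell x a b k}.encard ≤ 2 := by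
  have extremal : {k | IsAcceptedCell x a b k} ⊆
      {k | IsLeast {j | a ≤ x j} k ∨ IsGreatest {j | x (j + 1) ≤ b} k} := fun k hk =>
    (Int.even_or_odd k).symm.imp (hk.isLeast_of_odd hx) (hk.isGreatest_of_even hx)
  exact (Set.encard_le_encard extremal).trans (encard_isLeast_or_isGreatest_le_two _ _)

/-- at most two dyadic intervals of level `ℓ` fit inside `[a,b]`
while their parent dyadic interval does not. -/
theorem at_most_two_accepted_dyadic_intervals
    (a b : ℝ) (h0 : 0 ≤ a) (hab : a ≤ b) (hb : b ≤ 1) (ℓ : ℕ) (hℓ : 1 ≤ ℓ) :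
    Set.encard {k : ℤ |
      (a ≤ (k : ℝ) * (2 : ℝ) ^ (-(ℓ : ℤ)) ∧
        ((k : ℝ) + 1) * (2 : ℝ) ^ (-(ℓ : ℤ)) ≤ b) ∧
      ¬(a ≤ ((2 * (k / 2) : ℤ) : ℝ) * (2 : ℝ) ^ (-(ℓ : ℤ)) ∧
        ((2 * (k / 2) + 2 : ℤ) : ℝ) * (2 : ℝ) ^ (-(ℓ : ℤ)) ≤ b)} ≤ 2 := by
  have dyadic_grid_mono : Monotone fun k : ℤ => (k : ℝ) * (2 : ℝ) ^ (-(ℓ : ℤ)) :=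
    Int.cast_mono.mul_const (by positivity)
  simpa only [IsAcceptedCell, Int.cast_add, Int.cast_one] using
    at_most_two_accepted_dyadic_intervals_general dyadic_grid_mono a b
end

section
/- Let N ≥ 3 be an odd integer and let A be uniformly distributed on {0, 1, …, N−1}. Under the conditional probability measure given the event {A < N − 1}, the parity A mod 2 is uniformly distributed on {0,1}, the quotient ⌊A/2⌋ is uniformly distributed on {0, 1, …, (N−1)/2 − 1}, and A mod 2 and ⌊A/2⌋ are independent. -/
open MeasureTheory ProbabilityTheory
open scoped ENNReal

/-!
For `A < d * m`, division with remainder identifies `A` with a point `(A % d, A / d)` of the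
rectangle `{0, …, d - 1} × {0, …, m - 1}`. If `A` takes each value below `d * m` with the same mass,
then this pair takes each point of the rectangle with the same mass, so conditioning on the
rectangle makes it uniform there; and the uniform measure on a rectangle is the product of the
uniform measures on its sides. The theorem is the case `d = 2`, `N = 2 * m + 1`.
-/

section UniformMeasures

variable {α β : Type*} [MeasurableSpace α] [MeasurableSpace β]

lemma count_prod_apply {s : Set α} {t : Set β} (hs : MeasurableSet s) (ht : MeasurableSet t) :
    Measure.count (s ×ˢ t) = Measure.count s * Measure.count t := by
  rw [Measure.count_apply (hs.prod ht), Measure.count_apply hs, Measure.count_apply ht,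
    Set.encard_prod, ENat.toENNReal_mul]

variable [MeasurableSingletonClass α] [MeasurableSingletonClass β]

lemma uniformOn_prod {s : Set α} {t : Set β} (hs : s.Finite) (ht : t.Finite) :
    uniformOn (s ×ˢ t) = (uniformOn s).prod (uniformOn t) := by
  have hs_top : Measure.count s ≠ ∞ := (Measure.count_apply_lt_top.2 hs).ne
  have ht_top : Measure.count t ≠ ∞ := (Measure.count_apply_lt_top.2 ht).ne
  refine (Measure.prod_eq fun u v hu hv ↦ ?_).symm
  calc uniformOn (s ×ˢ t) (u ×ˢ v)
      = (Measure.count s * Measure.count t)⁻¹ *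
          (Measure.count (s ∩ u) * Measure.count (t ∩ v)) := by
        rw [uniformOn, cond_apply (hs.measurableSet.prod ht.measurableSet), Set.prod_inter_prod,
          count_prod_apply hs.measurableSet ht.measurableSet,
          count_prod_apply (hs.measurableSet.inter hu) (ht.measurableSet.inter hv)]
    _ = uniformOn s u * uniformOn t v := by
        rw [ENNReal.mul_inv (.inr ht_top) (.inl hs_top), mul_mul_mul_comm, uniformOn, uniformOn,
          cond_apply hs.measurableSet, cond_apply ht.measurableSet]

lemma measure_eq_of_hasLaw_uniformOn {Ω : Type*} [MeasurableSpace Ω] [DecidableEq α]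
    {P : Measure Ω} {X : Ω → α} {s : Finset α} (hX : HasLaw X (uniformOn (s : Set α)) P) (a : α) :
    P {ω | X ω = a} = if a ∈ s then 1 / (s.card : ℝ≥0∞) else 0 := by
  calc P {ω | X ω = a} = uniformOn (s : Set α) ({a} : Finset α) := by
        rw [Finset.coe_singleton]
        exact hX.measure_eq (measurableSet_singleton a)
    _ = if a ∈ s then 1 / (s.card : ℝ≥0∞) else 0 := by
        rw [uniformOn_apply_finset, Finset.inter_singleton]
        split_ifs <;> simp

end UniformMeasures

section ConstantMass

variable {Ω α : Type*} [MeasurableSpace Ω] [MeasurableSpace α] [MeasurableSingletonClass α]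
  {μ : Measure Ω} {X : Ω → α} {s : Finset α} {c : ℝ≥0∞}

lemma measure_preimage_finset_of_const (hX : Measurable X) (hmass : ∀ a ∈ s, μ (X ⁻¹' {a}) = c) :
    μ (X ⁻¹' s) = s.card * c := by
  rw [← sum_measure_preimage_singleton s fun a _ ↦ hX (measurableSet_singleton a),
    Finset.sum_congr rfl hmass, Finset.sum_const, nsmul_eq_mul]

lemma hasLaw_uniformOn_cond_of_const (hX : Measurable X) (hc₀ : c ≠ 0) (hc : c ≠ ∞)
    (hmass : ∀ a ∈ s, μ (X ⁻¹' {a}) = c) :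
    HasLaw X (uniformOn (s : Set α)) μ[|X ⁻¹' s] where
  aemeasurable := hX.aemeasurable
  map_eq := by
    classical
    ext t ht
    have inter_eq : (s : Set α) ∩ t = (s.filter (· ∈ t) : Finset α) := by ext; simp
    have mass_inter : μ (X ⁻¹' s ∩ X ⁻¹' t) = (s.filter (· ∈ t)).card * c := by
      rw [← Set.preimage_inter, inter_eq]
      exact measure_preimage_finset_of_const hX fun a ha ↦ hmass a (Finset.mem_of_mem_filter a ha)
    calc (μ[|X ⁻¹' s]).map X t
        = (s.filter (· ∈ t)).card * c / (s.card * c) := by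
          rw [Measure.map_apply hX ht, cond_apply (hX s.measurableSet), mass_inter,
            measure_preimage_finset_of_const hX hmass, ENNReal.div_eq_inv_mul]
      _ = (s.filter (· ∈ t)).card / s.card := ENNReal.mul_div_mul_right _ _ hc₀ hc
      _ = uniformOn (s : Set α) t := by
          rw [uniformOn, cond_apply s.measurableSet, inter_eq, Measure.count_apply_finset,
            Measure.count_apply_finset, ENNReal.div_eq_inv_mul]

end ConstantMass

section DivMod

variable {Ω : Type*} [MeasurableSpace Ω] {μ : Measure Ω} {A : Ω → ℕ} {d m : ℕ} {c : ℝ≥0∞}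

lemma mod_div_mem_range_product_iff (hd : d ≠ 0) (n : ℕ) :
    (n % d, n / d) ∈ Finset.range d ×ˢ Finset.range m ↔ n < d * m := by
  simp [Nat.mod_lt n (Nat.pos_of_ne_zero hd), Nat.div_lt_iff_lt_mul (Nat.pos_of_ne_zero hd),
    mul_comm]

lemma hasLaw_mod_div_cond_lt (hA : Measurable A) (hd : d ≠ 0) (hc₀ : c ≠ 0) (hc : c ≠ ∞)
    (hmass : ∀ n < d * m, μ {ω | A ω = n} = c) :
    HasLaw (fun ω ↦ (A ω % d, A ω / d))
      ((uniformOn (Finset.range d : Set ℕ)).prod (uniformOn (Finset.range m : Set ℕ)))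
      μ[|{ω | A ω < d * m}] := by
  set Z : Ω → ℕ × ℕ := fun ω ↦ (A ω % d, A ω / d)
  have hZ : Measurable Z :=
    (measurable_of_countable fun n : ℕ ↦ (n % d, n / d)).comp hA
  have event_eq : {ω | A ω < d * m} = Z ⁻¹' (Finset.range d ×ˢ Finset.range m : Finset (ℕ × ℕ)) :=
    Set.ext fun ω ↦ (mod_div_mem_range_product_iff hd (A ω)).symm
  have hZmass : ∀ p ∈ Finset.range d ×ˢ Finset.range m, μ (Z ⁻¹' {p}) = c := by
    rintro ⟨b, k⟩ hp
    have fiber (n : ℕ) : (n % d, n / d) = (b, k) ↔ n = b + d * k := by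
      have hb : b < d := Finset.mem_range.1 (Finset.mem_product.1 hp).1
      rw [Prod.mk.injEq, and_comm, Nat.div_mod_unique (Nat.pos_of_ne_zero hd)]
      exact ⟨fun h ↦ h.1.symm, fun h ↦ ⟨h.symm, hb⟩⟩
    have hlt : b + d * k < d * m := by
      rw [← mod_div_mem_range_product_iff hd, (fiber _).2 rfl]
      exact hp
    rw [← hmass _ hlt]
    exact congrArg μ (Set.ext fun ω ↦ fiber (A ω))
  rw [event_eq, ← uniformOn_prod (Finset.finite_toSet _) (Finset.finite_toSet _),
    ← Finset.coe_product]
  exact hasLaw_uniformOn_cond_of_const hZ hc₀ hc hZmass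

theorem uniform_odd_conditional_split_general (hA : Measurable A) (hd : d ≠ 0) (hm : m ≠ 0)
    (hc₀ : c ≠ 0) (hc : c ≠ ∞) (hmass : ∀ n < d * m, μ {ω | A ω = n} = c) :
    (∀ b : ℕ, μ[|{ω | A ω < d * m}] {ω | A ω % d = b} = if b < d then 1 / (d : ℝ≥0∞) else 0) ∧
    (∀ k : ℕ, μ[|{ω | A ω < d * m}] {ω | A ω / d = k} = if k < m then 1 / (m : ℝ≥0∞) else 0) ∧
    IndepFun (fun ω ↦ A ω % d) (fun ω ↦ A ω / d) μ[|{ω | A ω < d * m}] := by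
  have isProb {n : ℕ} (hn : n ≠ 0) : IsProbabilityMeasure (uniformOn (Finset.range n : Set ℕ)) :=
    isProbabilityMeasure_uniformOn (Finset.finite_toSet _) (by simpa using hn)
  have := isProb hd
  have := isProb hm
  have hpair := hasLaw_mod_div_cond_lt hA hd hc₀ hc hmass
  have hmod := measurePreserving_fst.fun_comp_hasLaw hpair
  have hdiv := measurePreserving_snd.fun_comp_hasLaw hpair
  refine ⟨fun b ↦ ?_, fun k ↦ ?_, (indepFun_iff_hasLaw_prodMk_prod hmod hdiv).2 hpair⟩
  · simpa only [Finset.mem_range, Finset.card_range] using measure_eq_of_hasLaw_uniformOn hmod b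
  · simpa only [Finset.mem_range, Finset.card_range] using measure_eq_of_hasLaw_uniformOn hdiv k

end DivMod

/-- for odd `N ≥ 3` and `A` uniform on `{0,…,N−1}`, conditionally on
`A < N − 1` the parity `A % 2` is a fair bit, the quotient `⌊A/2⌋` is uniform on
`{0,…,(N−1)/2 − 1}`, and the two are independent. -/
theorem uniform_odd_conditional_split
    {Ω : Type*} [MeasurableSpace Ω] (μ : Measure Ω) [IsProbabilityMeasure μ]
    (N : ℕ) (hN : 3 ≤ N) (hNodd : Odd N)
    (A : Ω → ℕ) (hAmeas : Measurable A)
    (hAunif : ∀ k : ℕ,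
      μ {ω | A ω = k} = if k < N then (1 : ℝ≥0∞) / (N : ℝ≥0∞) else 0) :
    (∀ b : ℕ,
      μ[|{ω | A ω < N - 1}] {ω | A ω % 2 = b} =
        if b < 2 then (1 : ℝ≥0∞) / 2 else 0) ∧
    (∀ k : ℕ,
      μ[|{ω | A ω < N - 1}] {ω | A ω / 2 = k} =
        if k < (N - 1) / 2 then (1 : ℝ≥0∞) / (((N - 1) / 2 : ℕ) : ℝ≥0∞) else 0) ∧
    IndepFun (fun ω => A ω % 2) (fun ω => A ω / 2) μ[|{ω | A ω < N - 1}] := by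
  obtain ⟨m, rfl⟩ := hNodd
  have hmass (n : ℕ) (hn : n < 2 * m) : μ {ω | A ω = n} = 1 / ((2 * m + 1 : ℕ) : ℝ≥0∞) :=
    (hAunif n).trans (if_pos (by omega))
  simpa using uniform_odd_conditional_split_general hAmeas two_ne_zero (by omega)
    (ENNReal.div_ne_zero.2 ⟨one_ne_zero, ENNReal.natCast_ne_top _⟩) (by simp) hmass
end

section
/- Let T : ℕ → ℝ satisfy T(1) = 0, T(2n) = 1 + T(n) for all n ≥ 1, and T(2n+1) = (2n/(2n+1))·(1 + T(n)) for all n ≥ 1. Then for every integer N ≥ 1, T(N) > log₂(N) − 3. -/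
/-!
The procedure started at `N` outputs at least `k` bits exactly for the samples
`A < 2 ^ k * ⌊N / 2 ^ k⌋`, so `N * T N` is the sum of `2 ^ k * ⌊N / 2 ^ k⌋` over
`1 ≤ k ≤ ⌊log₂ N⌋`. Each summand exceeds `N - 2 ^ k`, and these losses form a geometric series with
sum below `2 * N`. Hence `T N > ⌊log₂ N⌋ - 2 > log₂ N - 3`.
-/

open Finset

/-- The number of bits output by the extraction procedure, summed over all samples
`A ∈ {0, …, N - 1}`. The summand of index `i` counts the samples yielding at least `i + 1` bits. -/
def totalTosses (N : ℕ) : ℕ :=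
  ∑ i ∈ range (Nat.log 2 N), 2 ^ (i + 1) * (N / 2 ^ (i + 1))

theorem totalTosses_one : totalTosses 1 = 0 := by
  simp [totalTosses]

theorem totalTosses_eq_two_mul_half {N : ℕ} (hN : 2 ≤ N) :
    totalTosses N = 2 * (N / 2 + totalTosses (N / 2)) := by
  have log_eq : Nat.log 2 N = Nat.log 2 (N / 2) + 1 := Nat.log_of_one_lt_of_le one_lt_two hN
  have summand_eq (i : ℕ) :
      2 ^ (i + 1 + 1) * (N / 2 ^ (i + 1 + 1)) = 2 * (2 ^ (i + 1) * (N / 2 / 2 ^ (i + 1))) := by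
    rw [Nat.div_div_eq_div_mul, ← pow_succ', pow_succ' 2 (i + 1), mul_assoc]
  rw [totalTosses, log_eq, sum_range_succ', sum_congr rfl fun i _ ↦ summand_eq i, ← mul_sum,
    zero_add, pow_one, ← mul_add, add_comm, totalTosses]

theorem totalTosses_two_mul {n : ℕ} (hn : 1 ≤ n) :
    totalTosses (2 * n) = 2 * (n + totalTosses n) := by
  rw [totalTosses_eq_two_mul_half (by lia), Nat.mul_div_cancel_left n two_pos]

theorem totalTosses_two_mul_add_one {n : ℕ} (hn : 1 ≤ n) :
    totalTosses (2 * n + 1) = 2 * (n + totalTosses n) := by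
  rw [totalTosses_eq_two_mul_half (by lia), show (2 * n + 1) / 2 = n by lia]

theorem card_mul_le_sum_mul_div_add_sum {ι : Type*} (s : Finset ι) (d : ι → ℕ)
    (hd : ∀ i ∈ s, 0 < d i) (N : ℕ) :
    #s * N ≤ ∑ i ∈ s, d i * (N / d i) + ∑ i ∈ s, d i := by
  rw [← sum_add_distrib, ← smul_eq_mul]
  exact card_nsmul_le_sum s _ N fun i hi ↦ (Nat.lt_mul_div_succ N (hd i hi)).le

theorem sum_range_two_pow_succ_lt (k : ℕ) : ∑ i ∈ range k, 2 ^ (i + 1) < 2 * 2 ^ k := by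
  simp_rw [pow_succ', ← mul_sum]
  exact Nat.mul_lt_mul_of_pos_left (Nat.geomSum_lt le_rfl (by simp)) two_pos

theorem log_mul_lt_totalTosses_add_two_mul {N : ℕ} (hN : N ≠ 0) :
    Nat.log 2 N * N < totalTosses N + 2 * N :=
  calc Nat.log 2 N * N
      ≤ totalTosses N + ∑ i ∈ range (Nat.log 2 N), 2 ^ (i + 1) := by
        simpa only [totalTosses, card_range] using
          card_mul_le_sum_mul_div_add_sum (range (Nat.log 2 N)) (fun i ↦ 2 ^ (i + 1))
            (fun _ _ ↦ by positivity) N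
    _ < totalTosses N + 2 * 2 ^ Nat.log 2 N := by
        gcongr
        exact sum_range_two_pow_succ_lt _
    _ ≤ totalTosses N + 2 * N := by
        gcongr
        exact Nat.pow_log_le_self 2 hN

theorem mul_eq_totalTosses {K : Type*} [Field K] [CharZero K] {T : ℕ → K} (h1 : T 1 = 0)
    (heven : ∀ n : ℕ, 1 ≤ n → T (2 * n) = 1 + T n)
    (hodd : ∀ n : ℕ, 1 ≤ n → T (2 * n + 1) = ((2 * n : K) / (2 * n + 1)) * (1 + T n))
    {N : ℕ} (hN : 1 ≤ N) : (N : K) * T N = totalTosses N := by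
  induction N using Nat.strong_induction_on with
  | _ N ih =>
  obtain rfl | hN_two : N = 1 ∨ 2 ≤ N := by lia
  · simp [h1, totalTosses_one]
  obtain ⟨n, rfl | rfl⟩ := N.even_or_odd'
  · have hn : 1 ≤ n := by lia
    rw [heven n hn, totalTosses_two_mul hn]
    push_cast
    rw [← ih n (by lia) hn]
    ring
  · have hn : 1 ≤ n := by lia
    have denom_ne_zero : (2 * n + 1 : K) ≠ 0 := by exact_mod_cast (2 * n).succ_ne_zero
    rw [hodd n hn, totalTosses_two_mul_add_one hn]
    push_cast
    rw [← ih n (by lia) hn]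
    field_simp

theorem logb_natCast_lt_log_add_one (b n : ℕ) : Real.logb b n < Nat.log b n + 1 := by
  rw [← Real.natFloor_logb_natCast]
  exact Nat.lt_floor_add_one _

/-- the expected-toss recurrence `T(1)=0`, `T(2n)=1+T(n)`,
`T(2n+1) = (2n/(2n+1))·(1+T(n))` satisfies `T(N) > log₂(N) − 3`. -/
theorem toss_count_gt_log_sub_three
    (T : ℕ → ℝ) (h1 : T 1 = 0)
    (heven : ∀ n : ℕ, 1 ≤ n → T (2 * n) = 1 + T n)
    (hodd : ∀ n : ℕ, 1 ≤ n →
      T (2 * n + 1) = ((2 * n : ℝ) / (2 * n + 1)) * (1 + T n)) :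
    ∀ N : ℕ, 1 ≤ N → T N > Real.logb 2 N - 3 := by
  intro N hN
  have logb_lt : Real.logb 2 N < Nat.log 2 N + 1 := by
    exact_mod_cast logb_natCast_lt_log_add_one 2 N
  have log_lt : (Nat.log 2 N : ℝ) < T N + 2 := by
    have hN_pos : (0 : ℝ) < N := by exact_mod_cast hN
    refine lt_of_mul_lt_mul_right ?_ hN_pos.le
    calc (Nat.log 2 N * N : ℝ)
        < totalTosses N + 2 * N := by
          exact_mod_cast log_mul_lt_totalTosses_add_two_mul (Nat.ne_of_gt hN)
      _ = (T N + 2) * N := by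
          rw [← mul_eq_totalTosses h1 heven hodd hN]
          ring
  linarith
end

section
/- Let T : ℕ → ℝ satisfy T(1) = 0, T(2n) = 1 + T(n) for all n ≥ 1, and T(2n+1) = (2n/(2n+1))·(1 + T(n)) for all n ≥ 1. Then for every integer N ≥ 1, T(N) ≥ (1 + 2/N)·log₂(N) − 3. -/
/-!
The bound `B x = (1 + 2 / x) * log₂ x - 3` turns both recurrences into inequalities in the direction
needed for induction: the slack is `(log₂ x - 1) / x` in the even step and
`(log₂ x - (2 * x + 3) * log₂ (1 + 1 / (2 * x))) / (2 * x + 1)` in the odd step. It is the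
correction `2 / x` in `B` that makes `log₂ x` appear here with a positive sign. Since
`log (1 + y) ≤ y`, the subtracted terms are at most `2 ≤ log₂ x` once `4 ≤ x`. Hence `B N ≤ T N`
propagates from `N < 8`, where it survives replacing `log₂ N` by `⌈log₂ N⌉`.
-/

open Real

/-- The strengthened lower bound `(1 + 2 / x) * log₂ x - 3` on the expected number of tosses, as a
function of a real argument; it is meaningful for `0 < x`. -/
noncomputable def tossBound (x : ℝ) : ℝ :=
  (1 + 2 / x) * logb 2 x - 3

/-- `T N` is the expected number of fair coin tosses extracted from a uniform sample of
`{0, …, N - 1}`, characterised by its halving recurrences; `T 0` is unconstrained. -/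
structure IsTossCount (T : ℕ → ℝ) : Prop where
  one : T 1 = 0
  two_mul : ∀ n : ℕ, 1 ≤ n → T (2 * n) = 1 + T n
  two_mul_add_one : ∀ n : ℕ, 1 ≤ n → T (2 * n + 1) = (2 * n : ℝ) / (2 * n + 1) * (1 + T n)

theorem logb_one_add_le_div_log {b y : ℝ} (hb : 1 < b) (hy : -1 < y) :
    logb b (1 + y) ≤ y / log b := by
  have log_le : log (1 + y) ≤ y := by
    linarith [log_le_sub_one_of_pos (show 0 < 1 + y by linarith)]
  exact div_le_div_of_nonneg_right log_le (log_pos hb).le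

theorem logb_two_mul_add_one {x : ℝ} (hx : 0 < x) :
    logb 2 (2 * x + 1) = 1 + logb 2 x + logb 2 (1 + 1 / (2 * x)) := by
  have factor : 2 * x + 1 = 2 * x * (1 + 1 / (2 * x)) := by field_simp
  rw [factor, logb_mul (by positivity) (by positivity), logb_mul two_ne_zero hx.ne',
    logb_self_eq_one one_lt_two]

theorem two_mul_add_three_mul_logb_le_two {x : ℝ} (hx : 4 ≤ x) :
    (2 * x + 3) * logb 2 (1 + 1 / (2 * x)) ≤ 2 := by
  have log_two_ge : 11 / 16 ≤ log 2 := by linarith [log_two_gt_d9]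
  have inv_pos : 0 < 1 / (2 * x) := by positivity
  calc (2 * x + 3) * logb 2 (1 + 1 / (2 * x))
      ≤ (2 * x + 3) * (1 / (2 * x) / log 2) := by
        gcongr
        exact logb_one_add_le_div_log one_lt_two (by linarith)
    _ = (1 + 3 / (2 * x)) / log 2 := by field_simp
    _ ≤ (1 + 3 / (2 * 4)) / (11 / 16) := by gcongr
    _ = 2 := by norm_num

theorem one_add_tossBound_sub_tossBound_two_mul {x : ℝ} (hx : x ≠ 0) :
    1 + tossBound x - tossBound (2 * x) = (logb 2 x - 1) / x := by
  rw [tossBound, tossBound, logb_mul two_ne_zero hx, logb_self_eq_one one_lt_two]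
  field_simp
  ring

theorem mul_one_add_tossBound_sub_tossBound_two_mul_add_one {x : ℝ} (hx : 0 < x) :
    2 * x / (2 * x + 1) * (1 + tossBound x) - tossBound (2 * x + 1) =
      (logb 2 x - (2 * x + 3) * logb 2 (1 + 1 / (2 * x))) / (2 * x + 1) := by
  rw [tossBound, tossBound, logb_two_mul_add_one hx]
  field_simp
  ring

theorem tossBound_two_mul_le {x : ℝ} (hx : 2 ≤ x) : tossBound (2 * x) ≤ 1 + tossBound x := by
  have hx0 : 0 < x := by linarith
  have one_le_logb : 1 ≤ logb 2 x := by
    rwa [le_logb_iff_rpow_le one_lt_two hx0, rpow_one]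
  rw [← sub_nonneg, one_add_tossBound_sub_tossBound_two_mul hx0.ne']
  exact div_nonneg (sub_nonneg.2 one_le_logb) hx0.le

theorem tossBound_two_mul_add_one_le {x : ℝ} (hx : 4 ≤ x) :
    tossBound (2 * x + 1) ≤ 2 * x / (2 * x + 1) * (1 + tossBound x) := by
  have hx0 : 0 < x := by linarith
  have two_le_logb : 2 ≤ logb 2 x := by
    rw [le_logb_iff_rpow_le one_lt_two hx0]
    norm_num [hx]
  rw [← sub_nonneg, mul_one_add_tossBound_sub_tossBound_two_mul_add_one hx0]
  have error_le := (two_mul_add_three_mul_logb_le_two hx).trans two_le_logb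
  exact div_nonneg (sub_nonneg.2 error_le) (by positivity)

theorem tossBound_le_of_le_two_pow {x : ℝ} {k : ℕ} (hx : 0 < x) (hxk : x ≤ 2 ^ k) :
    tossBound x ≤ (1 + 2 / x) * k - 3 := by
  have logb_le : logb 2 x ≤ k := by
    rwa [logb_le_iff_le_rpow one_lt_two hx, rpow_natCast]
  unfold tossBound
  gcongr

theorem IsTossCount.tossBound_le_of_lt_eight {T : ℕ → ℝ} (hT : IsTossCount T) {N : ℕ}
    (hN : 1 ≤ N) (hN8 : N < 8) : tossBound N ≤ T N := by
  have T1 : T 1 = 0 := hT.one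
  have T2 : T 2 = 1 := (hT.two_mul 1 (by norm_num)).trans (by norm_num [T1])
  have T3 : T 3 = 2 / 3 := (hT.two_mul_add_one 1 (by norm_num)).trans (by norm_num [T1])
  have T4 : T 4 = 2 := (hT.two_mul 2 (by norm_num)).trans (by norm_num [T2])
  have T5 : T 5 = 8 / 5 := (hT.two_mul_add_one 2 (by norm_num)).trans (by norm_num [T2])
  have T6 : T 6 = 5 / 3 := (hT.two_mul 3 (by norm_num)).trans (by norm_num [T3])
  have T7 : T 7 = 10 / 7 := (hT.two_mul_add_one 3 (by norm_num)).trans (by norm_num [T3])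
  have hN0 : (0 : ℝ) < N := by exact_mod_cast hN
  have le_two_pow_clog : (N : ℝ) ≤ 2 ^ Nat.clog 2 N := by
    exact_mod_cast Nat.le_pow_clog one_lt_two N
  refine (tossBound_le_of_le_two_pow hN0 le_two_pow_clog).trans ?_
  interval_cases N <;> norm_num [T1, T2, T3, T4, T5, T6, T7]

/-- the expected-toss recurrence `T(1)=0`, `T(2n)=1+T(n)`,
`T(2n+1) = (2n/(2n+1))·(1+T(n))` satisfies the strengthened bound
`T(N) ≥ (1 + 2/N)·log₂(N) − 3`. -/
theorem toss_count_ge_strengthened_bound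
    (T : ℕ → ℝ) (h1 : T 1 = 0)
    (heven : ∀ n : ℕ, 1 ≤ n → T (2 * n) = 1 + T n)
    (hodd : ∀ n : ℕ, 1 ≤ n →
      T (2 * n + 1) = ((2 * n : ℝ) / (2 * n + 1)) * (1 + T n)) :
    ∀ N : ℕ, 1 ≤ N → T N ≥ (1 + 2 / (N : ℝ)) * Real.logb 2 N - 3 := by
  have hT : IsTossCount T := ⟨h1, heven, hodd⟩
  intro N hN
  change tossBound N ≤ T N
  induction N using Nat.strong_induction_on with
  | _ N ih =>
  rcases lt_or_ge N 8 with hN8 | hN8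
  · exact hT.tossBound_le_of_lt_eight hN hN8
  obtain ⟨n, rfl | rfl⟩ := Nat.even_or_odd' N
  all_goals
    have hn : (4 : ℝ) ≤ n := by exact_mod_cast (by lia : 4 ≤ n)
    have ihn : tossBound n ≤ T n := ih n (by lia) (by lia)
    push_cast
  · calc tossBound (2 * n) ≤ 1 + tossBound n := tossBound_two_mul_le (by linarith)
      _ ≤ 1 + T n := by gcongr
      _ = T (2 * n) := (heven n (by lia)).symm
  · calc tossBound (2 * n + 1) ≤ 2 * n / (2 * n + 1) * (1 + tossBound n) :=
          tossBound_two_mul_add_one_le hn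
      _ ≤ 2 * n / (2 * n + 1) * (1 + T n) := by gcongr
      _ = T (2 * n + 1) := (hodd n (by lia)).symm
end

section
/- For every real number x ≥ 9, the inequality (x + 3)·log₂(x − 1) ≥ (x + 2)·log₂(x) + 1 holds. -/
/-!
Writing `Δ = log₂ x - log₂ (x - 1)`, the claim is `(x + 2) * Δ + 1 ≤ log₂ (x - 1)`. For `x ≥ 9` the
right side is at least `log₂ 8 = 3`, while `log t ≤ t - 1` bounds `(x + 2) * Δ` by
`(x + 2) / ((x - 1) * log 2) ≤ 11 / (8 * log 2) < 2`.
-/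

theorem logb_sub_logb_le_div {b x y : ℝ} (hb : 1 < b) (hx : 0 < x) (hy : 0 < y) :
    Real.logb b x - Real.logb b y ≤ (x - y) / (y * Real.log b) := by
  have log_quotient_le : Real.log (x / y) ≤ (x - y) / y := by
    simpa only [sub_div, div_self hy.ne'] using Real.log_le_sub_one_of_pos (div_pos hx hy)
  calc Real.logb b x - Real.logb b y = Real.log (x / y) / Real.log b := by
        rw [← Real.logb_div hx.ne' hy.ne', Real.log_div_log]
    _ ≤ (x - y) / y / Real.log b := div_le_div_of_nonneg_right log_quotient_le (Real.log_pos hb).le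
    _ = (x - y) / (y * Real.log b) := div_div _ _ _

theorem add_two_mul_logb_two_sub_logb_two_sub_one_le_two {x : ℝ} (hx : 9 ≤ x) :
    (x + 2) * (Real.logb 2 x - Real.logb 2 (x - 1)) ≤ 2 := by
  have log_two_gt : 11 / 16 < Real.log 2 := by linarith [Real.log_two_gt_d9]
  have logb_gap_le : Real.logb 2 x - Real.logb 2 (x - 1) ≤ 1 / ((x - 1) * Real.log 2) := by
    simpa only [sub_sub_cancel] using
      logb_sub_logb_le_div one_lt_two (x := x) (y := x - 1) (by linarith) (by linarith)
  calc (x + 2) * (Real.logb 2 x - Real.logb 2 (x - 1))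
      ≤ (x + 2) * (1 / ((x - 1) * Real.log 2)) := by gcongr
    _ = (x + 2) / ((x - 1) * Real.log 2) := mul_one_div _ _
    _ ≤ (x + 2) / ((x - 1) * (11 / 16)) := by gcongr <;> linarith
    _ ≤ 2 := by
      rw [div_le_iff₀ (by linarith)]
      linarith

/-- for `x ≥ 9`, `(x+3)·log₂(x−1) ≥ (x+2)·log₂(x) + 1`. -/
theorem key_log_inequality (x : ℝ) (hx : 9 ≤ x) :
    (x + 3) * Real.logb 2 (x - 1) ≥ (x + 2) * Real.logb 2 x + 1 := by
  have three_le_logb : 3 ≤ Real.logb 2 (x - 1) := by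
    rw [Real.le_logb_iff_rpow_le one_lt_two (by linarith)]
    calc (2 : ℝ) ^ (3 : ℝ) = 8 := by norm_num
      _ ≤ x - 1 := by linarith
  have logb_gap_le := add_two_mul_logb_two_sub_logb_two_sub_one_le_two hx
  calc (x + 2) * Real.logb 2 x + 1
      = (x + 2) * (Real.logb 2 x - Real.logb 2 (x - 1)) + 1 + (x + 2) * Real.logb 2 (x - 1) := by
        ring
    _ ≤ Real.logb 2 (x - 1) + (x + 2) * Real.logb 2 (x - 1) := by linarith
    _ = (x + 3) * Real.logb 2 (x - 1) := by ring
end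

section
/- For every real number x ≥ 9, the inequality log₂(x) ≥ 1 + log₂(e)·(x + 3)/(x − 1) holds, where log₂(e) = 1/ln(2). -/
/-!
Exponentiating in base `2` turns the claim into `2 * exp ((x + 3) / (x - 1)) ≤ x`. Its left side
decreases in `x`, so it suffices to check `x = 9`, where the claim `2 * exp (3 / 2) ≤ 9` follows
from `exp 1 ^ 3 ≤ (9 / 2) ^ 2` (numerically, `20.09 ≤ 20.25`).
-/

open Real Set

theorem antitoneOn_add_div_sub {K : Type*} [Field K] [LinearOrder K] [IsStrictOrderedRing K]
    {a b : K} (hab : 0 ≤ a + b) : AntitoneOn (fun x ↦ (x + a) / (x - b)) (Ioi b) := by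
  intro x hx y hy hxy
  have hx_pos : 0 < x - b := sub_pos.2 hx
  have hy_pos : 0 < y - b := sub_pos.2 hy
  have hcross : 0 ≤ (a + b) * (y - x) := mul_nonneg hab (sub_nonneg.2 hxy)
  exact (div_le_div_iff₀ hy_pos hx_pos).2 (by linarith)

theorem logb_self_mul_exp {b : ℝ} (hb : 0 < b) (hb_ne_one : b ≠ 1) (t : ℝ) :
    logb b (b * exp t) = 1 + logb b (exp 1) * t := by
  have hself : logb b b = 1 := by
    simpa using logb_rpow hb hb_ne_one (x := 1)
  have hexp : logb b (exp t) = logb b (exp 1) * t := by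
    rw [← exp_one_rpow t, logb_rpow_eq_mul_logb_of_pos (exp_pos 1), mul_comm]
  rw [logb_mul hb.ne' (exp_ne_zero t), hself, hexp]

theorem two_mul_exp_three_halves_le_nine : 2 * exp (3 / 2) ≤ 9 := by
  have hsq : exp (3 / 2) ^ 2 ≤ (9 / 2) ^ 2 :=
    calc exp (3 / 2) ^ 2 = exp 1 ^ 3 := by
          rw [← exp_nat_mul, ← exp_nat_mul]
          norm_num
      _ ≤ 2.7182818286 ^ 3 := by gcongr; exact exp_one_lt_d9.le
      _ ≤ (9 / 2) ^ 2 := by norm_num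
  have hexp : exp (3 / 2) ≤ 9 / 2 := le_of_sq_le_sq hsq (by norm_num)
  linarith

/-- for `x ≥ 9`, `log₂(x) ≥ 1 + log₂(e)·(x+3)/(x−1)`,
where `log₂(e) = 1/ln 2`. -/
theorem reduced_log_inequality (x : ℝ) (hx : 9 ≤ x) :
    Real.logb 2 x ≥ 1 + Real.logb 2 (Real.exp 1) * ((x + 3) / (x - 1)) := by
  have hratio : (x + 3) / (x - 1) ≤ 3 / 2 :=
    calc (x + 3) / (x - 1) ≤ (9 + 3) / (9 - 1) :=
          antitoneOn_add_div_sub (by norm_num) (mem_Ioi.2 (by norm_num))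
            (mem_Ioi.2 (by linarith)) hx
      _ = 3 / 2 := by norm_num
  have hexp : 2 * exp ((x + 3) / (x - 1)) ≤ x :=
    calc 2 * exp ((x + 3) / (x - 1)) ≤ 2 * exp (3 / 2) := by gcongr
      _ ≤ 9 := two_mul_exp_three_halves_le_nine
      _ ≤ x := hx
  rw [← logb_self_mul_exp two_pos (by norm_num)]
  exact logb_le_logb_of_le one_lt_two (by positivity) hexp
end
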